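/- For every natural number n and every complex number z with Re z ≥ 0, one has R_n(z) ≠ 0; that is, all zeros of the polynomial R_n lie in the open left half-plane {z ∈ ℂ : Re z < 0}. -/

import Mathlib

/-- `R n z = ∑_{m=0}^{n} ((n+m)! / (m! (n-m)!)) z^m` for `z ∈ ℂ`. -/
noncomputable def R (n : ℕ) (z : ℂ) : ℂ :=
  ∑ m ∈ Finset.range (n + 1),
    ((Nat.factorial (n + m) : ℂ) / ((Nat.factorial m : ℂ) * (Nat.factorial (n - m) : ℂ))) * z ^ m

noncomputable def Rcoef (n m : ℕ) : ℂ :=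
  if m ≤ n then
    (Nat.factorial (n + m) : ℂ) / ((Nat.factorial m : ℂ) * (Nat.factorial (n - m) : ℂ)) else 0

lemma R_eq_sum (n N : ℕ) (h : n + 1 ≤ N) (z : ℂ) :
    R n z = ∑ m ∈ Finset.range N, Rcoef n m * z ^ m := by
  unfold R
  rw [← Finset.sum_subset (s₁ := Finset.range (n + 1)) (s₂ := Finset.range N)]
  · refine Finset.sum_congr rfl fun m hm => ?_
    have : m ≤ n := by simp at hm; omega
    simp [Rcoef, this]
  · intro x hx; simp at *; omega
  · intro x _ hx
    have : ¬ x ≤ n := by simp at hx; omega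
    simp [Rcoef, this]

lemma Rcoef_zero (n : ℕ) : Rcoef n 0 = 1 := by
  have : (Nat.factorial n : ℂ) ≠ 0 := by exact_mod_cast Nat.factorial_ne_zero n
  simp [Rcoef, this]

lemma Rcoef_succ (n m : ℕ) :
    Rcoef (n + 2) (m + 1) = 2 * (2 * n + 3) * Rcoef (n + 1) m + Rcoef n (m + 1) := by
  have hm : (Nat.factorial m : ℂ) ≠ 0 := by exact_mod_cast Nat.factorial_ne_zero m
  have hm1 : (m + 1 : ℂ) ≠ 0 := by exact_mod_cast Nat.succ_ne_zero m
  rcases lt_or_ge n (m + 1) with h | h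
  · rcases lt_or_ge (n + 1) m with h2 | h2
    · simp [Rcoef, show ¬ m + 1 ≤ n + 2 by omega, show ¬ m ≤ n + 1 by omega,
        show ¬ m + 1 ≤ n by omega]
    · obtain rfl | rfl : m = n ∨ m = n + 1 := by omega
      · simp only [Rcoef, show m + 1 ≤ m + 2 by omega, show m ≤ m + 1 by omega,
          show ¬ m + 1 ≤ m by omega, if_true, if_false,
          show m + 2 + (m + 1) = (m + 1 + m) + 1 + 1 by omega,
          show m + 2 - (m + 1) = 1 by omega, show m + 1 - m = 1 by omega,
          Nat.factorial_succ (m + 1 + m + 1), Nat.factorial_succ (m + 1 + m),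
          Nat.factorial_succ m]
        push_cast
        field_simp
        simp
        ring
      · simp only [Rcoef, le_refl, show ¬ n + 1 + 1 ≤ n by omega, if_true, if_false,
          show n + 2 + (n + 1 + 1) = (n + 1 + (n + 1)) + 1 + 1 by omega,
          show n + 1 + 1 ≤ n + 2 by omega,
          show n + 2 - (n + 1 + 1) = 0 by omega, show n + 1 - (n + 1) = 0 by omega,
          Nat.factorial_succ (n + 1 + (n + 1) + 1), Nat.factorial_succ (n + 1 + (n + 1)),
          Nat.factorial_succ (n + 1)]
        push_cast at *
        field_simp
        simp
        ring
  · obtain ⟨k, rfl⟩ := Nat.exists_eq_add_of_le h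
    have hk : (Nat.factorial k : ℂ) ≠ 0 := by exact_mod_cast Nat.factorial_ne_zero k
    have hk1 : (k + 1 : ℂ) ≠ 0 := by exact_mod_cast Nat.succ_ne_zero k
    have hk2 : (k + 1 + 1 : ℂ) ≠ 0 := by exact_mod_cast Nat.succ_ne_zero (k + 1)
    simp only [Rcoef, show m + 1 ≤ m + 1 + k + 2 by omega, show m ≤ m + 1 + k + 1 by omega,
      show m + 1 ≤ m + 1 + k by omega, if_true,
      show m + 1 + k + 2 + (m + 1) = (m + 1 + k + 1 + m) + 1 + 1 by omega,
      show m + 1 + k + (m + 1) = m + 1 + k + 1 + m by omega,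
      show m + 1 + k + 2 - (m + 1) = k + 1 + 1 by omega,
      show m + 1 + k + 1 - m = k + 1 + 1 by omega, show m + 1 + k - (m + 1) = k by omega,
      Nat.factorial_succ (m + 1 + k + 1 + m + 1), Nat.factorial_succ (m + 1 + k + 1 + m),
      Nat.factorial_succ m, Nat.factorial_succ (k + 1), Nat.factorial_succ k]
    push_cast
    field_simp
    ring

lemma R_rec (n : ℕ) (z : ℂ) :
    R (n + 2) z = 2 * (2 * n + 3) * z * R (n + 1) z + R n z := by
  rw [R_eq_sum (n + 2) (n + 3) (by omega), R_eq_sum (n + 1) (n + 2) (by omega),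
    R_eq_sum n (n + 3) (by omega), Finset.sum_range_succ' _ (n + 2),
    Finset.sum_range_succ' _ (n + 2), Finset.mul_sum, ← add_assoc, ← Finset.sum_add_distrib]
  simp only [Rcoef_zero, Rcoef_succ]
  congr 1
  refine Finset.sum_congr rfl fun m _ => ?_
  ring

lemma R_pos (n : ℕ) (z : ℂ) (hz : 0 ≤ z.re) :
    0 < (R (n + 1) z).re * (R n z).re + (R (n + 1) z).im * (R n z).im := by
  induction n with
  | zero =>
    simp [R, Finset.sum_range_succ]
    linarith
  | succ n ih =>
    have h := R_rec n z
    have hre : (R (n + 2) z).re = 2 * (2 * n + 3) *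
        (z.re * (R (n + 1) z).re - z.im * (R (n + 1) z).im) + (R n z).re := by
      have : R (n + 2) z = ((2 * (2 * n + 3) : ℝ) : ℂ) * (z * R (n + 1) z) + R n z := by
        rw [h]; push_cast; ring
      rw [this, Complex.add_re, Complex.re_ofReal_mul, Complex.mul_re]
    have him : (R (n + 2) z).im = 2 * (2 * n + 3) *
        (z.re * (R (n + 1) z).im + z.im * (R (n + 1) z).re) + (R n z).im := by
      have : R (n + 2) z = ((2 * (2 * n + 3) : ℝ) : ℂ) * (z * R (n + 1) z) + R n z := by
        rw [h]; push_cast; ring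
      rw [this, Complex.add_im, Complex.im_ofReal_mul, Complex.mul_im]
    rw [show n + 1 + 1 = n + 2 from rfl, hre, him]
    have : 0 ≤ 2 * (2 * (n : ℝ) + 3) * z.re * ((R (n + 1) z).re ^ 2 + (R (n + 1) z).im ^ 2) := by
      positivity
    linarith

/-- All zeros of `R n` lie in the open left half-plane: if `Re z ≥ 0` then `R n z ≠ 0`. -/
theorem Rn_ne_zero_of_re_nonneg (n : ℕ) (z : ℂ) (hz : 0 ≤ z.re) : R n z ≠ 0 := by
  intro h
  have := R_pos n z hz
  simp [h] at this
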